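/- Suppose A is finite and the functions g_i : A → ℝ_+ satisfy Σ_{i=0}^∞ Σ_{k=i}^∞ log max{‖g_k‖_∞, ‖g_k^{−1}‖_∞} < ∞. Then there exists exactly one conformal measure for the product-type potential g(x) = g_0 Π_{i=1}^∞ g_i(x_i); moreover this measure is ergodic for the shift. -/

import Mathlib

open MeasureTheory

/-- The left shift on `A^ℕ`. -/
def shiftMap (A : Type*) : (ℕ → A) → ℕ → A := fun x n => x (n + 1)

/-- `ν` is conformal for the potential `G` with parameter `lam`:
`ν(T(C)) = lam ∫_C G dν` for every measurable `C` on which the shift is injective. -/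
def IsConformalFor {A : Type*} [MeasurableSpace A] (G : (ℕ → A) → ℝ) (lam : ℝ)
    (ν : Measure (ℕ → A)) : Prop :=
  ∀ C : Set (ℕ → A), MeasurableSet C → Set.InjOn (shiftMap A) C →
    ν (shiftMap A '' C) = ENNReal.ofReal (lam * ∫ x in C, G x ∂ν)

open scoped ENNReal
open Classical in
/-- indicator of `x n = a` -/
noncomputable def cI {A : Type*} (n : ℕ) (a : A) (x : ℕ → A) : ℝ≥0∞ := if x n = a then 1 else 0

/-- prepend a letter -/
def consMap {A : Type*} (a : A) (y : ℕ → A) : ℕ → A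
  | 0 => a
  | n + 1 => y n

/-- the weights -/
noncomputable def wt {A : Type*} (γ : ℕ → A → ℝ≥0∞) (n : ℕ) (a : A) : ℝ≥0∞ :=
  ∏ k ∈ Finset.range (n + 1), γ k a

/-- swap quasi-invariance -/
def SwapInv {A : Type*} [MeasurableSpace A] (γ : ℕ → A → ℝ≥0∞) (ν : Measure (ℕ → A)) : Prop :=
  ∀ (n : ℕ) (a b : A) (F : (ℕ → A) → ℝ≥0∞), Measurable F →
    wt γ n a * ∫⁻ x, cI n a x * F (Function.update x n b) ∂ν
      = wt γ n b * ∫⁻ x, cI n b x * F x ∂ν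

/-- transfer identity -/
def TransferId {A : Type*} [MeasurableSpace A] (Gam : (ℕ → A) → ℝ≥0∞) (l : ℝ≥0∞)
    (ν : Measure (ℕ → A)) : Prop :=
  ∀ (a : A) (f : (ℕ → A) → ℝ≥0∞), Measurable f →
    ∫⁻ y, f y ∂ν = l * ∫⁻ x, cI 0 a x * (f (shiftMap A x) * Gam x) ∂ν

lemma cons_shift {A : Type*} (x : ℕ → A) (b : A) :
    consMap b (shiftMap A x) = Function.update x 0 b := by
  funext n; cases n <;> simp [consMap, shiftMap]

lemma shift_cons {A : Type*} (y : ℕ → A) (b : A) :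
    shiftMap A (consMap b y) = y := by
  funext n; simp [consMap, shiftMap]

lemma cons_update {A : Type*} (y : ℕ → A) (c b : A) (n : ℕ) :
    consMap c (Function.update y n b) = Function.update (consMap c y) (n + 1) b := by
  funext m; cases m <;> simp [consMap, Function.update_apply]

lemma shift_update {A : Type*} (x : ℕ → A) (b : A) (n : ℕ) :
    shiftMap A (Function.update x (n + 1) b) = Function.update (shiftMap A x) n b := by
  funext m; simp [shiftMap, Function.update_apply]

lemma shift_update_zero {A : Type*} (x : ℕ → A) (b : A) :
    shiftMap A (Function.update x 0 b) = shiftMap A x := by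
  funext m; simp [shiftMap, Function.update_apply]

lemma measurable_shiftMap {A : Type*} [MeasurableSpace A] : Measurable (shiftMap A) := by
  unfold shiftMap; fun_prop

lemma measurable_consMap {A : Type*} [MeasurableSpace A] (a : A) : Measurable (consMap a) := by
  refine measurable_pi_lambda _ fun n => ?_
  cases n <;> simp only [consMap] <;> fun_prop

lemma measurable_upd {A : Type*} [MeasurableSpace A] (n : ℕ) (b : A) :
    Measurable (fun x : ℕ → A => Function.update x n b) := by
  refine measurable_pi_lambda _ fun m => ?_
  by_cases h : m = n
  · subst h; simp
  · simp only [Function.update_of_ne h]; fun_prop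

lemma measurableSet_coord {A : Type*} [MeasurableSpace A] [MeasurableSingletonClass A] (n : ℕ)
    (a : A) : MeasurableSet {x : ℕ → A | x n = a} := by
  have e : {x : ℕ → A | x n = a} = (fun x : ℕ → A => x n) ⁻¹' {a} := by ext; simp
  rw [e]
  exact measurable_pi_apply n (measurableSet_singleton a)

lemma measurable_cI {A : Type*} [MeasurableSpace A] [MeasurableSingletonClass A] (n : ℕ) (a : A) :
    Measurable (cI n a) := by
  unfold cI
  refine Measurable.ite ?_ measurable_const measurable_const
  exact measurableSet_coord n a

lemma sum_cI {A : Type*} [Fintype A] (n : ℕ) (h : A → ℝ≥0∞) (x : ℕ → A) :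
    ∑ a, h a * cI n a x = h (x n) := by
  classical
  simp [cI]

lemma cI_mul_congr {A : Type*} {n : ℕ} {a : A} {x : ℕ → A} {u v : ℝ≥0∞}
    (h : x n = a → u = v) : cI n a x * u = cI n a x * v := by
  unfold cI; split_ifs with h1
  · rw [h h1]
  · simp

lemma ennreal_inv_swap {u v p q : ℝ≥0∞} (hu : u ≠ 0) (hu' : u ≠ ∞) (hv : v ≠ 0) (hv' : v ≠ ∞)
    (h : u * p = v * q) : p * v⁻¹ = q * u⁻¹ := by
  calc p * v⁻¹ = (u * u⁻¹) * p * v⁻¹ := by rw [ENNReal.mul_inv_cancel hu hu', one_mul]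
    _ = (u * p) * (u⁻¹ * v⁻¹) := by ring
    _ = (v * v⁻¹) * q * u⁻¹ := by rw [h]; ring
    _ = q * u⁻¹ := by rw [ENNReal.mul_inv_cancel hv hv', one_mul]

section main
variable {A : Type*} [Fintype A] [MeasurableSpace A] [MeasurableSingletonClass A]

lemma swapInv_of_transfer {γ : ℕ → A → ℝ≥0∞} {Gam : (ℕ → A) → ℝ≥0∞} {l : ℝ≥0∞}
    {ν : Measure (ℕ → A)}
    (hl0 : l ≠ 0) (hlt : l ≠ ∞)
    (hG0 : ∀ x, Gam x ≠ 0) (hGt : ∀ x, Gam x ≠ ∞) (hGm : Measurable Gam)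
    (hGs : ∀ x n b, Gam (Function.update x n b) * γ n (x n) = Gam x * γ n b)
    (hK : TransferId Gam l ν) : SwapInv γ ν := by
  have hK' : ∀ (c : A) (H : (ℕ → A) → ℝ≥0∞), Measurable H →
      ∫⁻ y, H (consMap c y) * (Gam (consMap c y))⁻¹ ∂ν = l * ∫⁻ x, cI 0 c x * H x ∂ν := by
    intro c H hH
    rw [hK c (fun y => H (consMap c y) * (Gam (consMap c y))⁻¹) ((hH.comp (measurable_consMap c)).mul
      (hGm.comp (measurable_consMap c)).inv)]
    congr 1
    refine lintegral_congr fun x => cI_mul_congr fun h => ?_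
    have : Function.update x 0 c = x := by rw [← h]; simp
    simp only [Function.comp, cons_shift, this]
    rw [mul_assoc, ENNReal.inv_mul_cancel (hG0 _) (hGt _), mul_one]
  intro n
  induction n with
  | zero =>
    intro a b F hF
    have h1 := hK' b F hF
    rw [hK a (fun y => F (consMap b y) * (Gam (consMap b y))⁻¹)
      ((hF.comp (measurable_consMap b)).mul
      (hGm.comp (measurable_consMap b)).inv), ENNReal.mul_right_inj hl0 hlt] at h1
    rw [← h1]
    simp only [wt, zero_add, Finset.range_one, Finset.prod_singleton]
    have hmF := hF.comp (measurable_upd 0 b)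
    have hm1 := measurable_cI (A := A) 0 a
    have hu : Measurable fun x => (Gam (Function.update x 0 b)) := hGm.comp (measurable_upd 0 b)
    simp only [Function.comp, cons_shift] at hmF ⊢
    rw [← lintegral_const_mul _ (by fun_prop), ← lintegral_const_mul _ (by fun_prop)]
    refine lintegral_congr fun x => ?_
    rw [mul_left_comm, mul_left_comm (γ 0 b)]
    refine cI_mul_congr fun h => ?_
    have h2 := hGs x 0 b
    rw [h] at h2
    calc γ 0 a * F (Function.update x 0 b)
        = F (Function.update x 0 b) * (Gam (Function.update x 0 b))⁻¹
          * (Gam (Function.update x 0 b) * γ 0 a) := by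
          rw [show ∀ p q r s : ℝ≥0∞, p * q * (r * s) = (q * r) * (s * p) by intros; ring,
            ENNReal.inv_mul_cancel (hG0 _) (hGt _), one_mul]
      _ = _ := by rw [h2]; ring
  | succ n ih =>
    intro a b F hF
    have key : ∀ c, wt γ (n + 1) a * ∫⁻ x, cI 0 c x * (cI (n + 1) a x *
          F (Function.update x (n + 1) b)) ∂ν
        = wt γ (n + 1) b * ∫⁻ x, cI 0 c x * (cI (n + 1) b x * F x) ∂ν := by
      intro c
      have hmF := hF.comp (measurable_upd (n + 1) b)
      have hm1 := measurable_cI (A := A) (n + 1) a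
      have hm1' := measurable_cI (A := A) n a
      have hm2 := measurable_cI (A := A) (n + 1) b
      have hmc := measurable_consMap (A := A) c
      rw [← ENNReal.mul_right_inj hl0 hlt, mul_left_comm, mul_left_comm l]
      rw [← hK' c (fun x => cI (n + 1) a x * F (Function.update x (n + 1) b)) (hm1.mul hmF),
        ← hK' c (fun x => cI (n + 1) b x * F x) (hm2.mul hF)]
      have h3 := ih a b (fun y => F (consMap c y) * (Gam (consMap c y))⁻¹)
        ((hF.comp hmc).mul (hGm.comp hmc).inv)
      have hw : ∀ a, wt γ (n + 1) a = wt γ n a * γ (n + 1) a := fun a =>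
        Finset.prod_range_succ _ _
      have hc : ∀ a y, cI (n + 1) a (consMap c y) = cI n a y := fun a y => rfl
      simp only [hw, Function.comp, hc, ← cons_update]
      have hFu : Measurable fun y => F (consMap c (Function.update y n b)) :=
        hF.comp (hmc.comp (measurable_upd n b))
      have hGu : Measurable fun y => Gam (consMap c (Function.update y n b)) :=
        hGm.comp (hmc.comp (measurable_upd n b))
      have h4 : γ (n + 1) a * ∫⁻ y, cI n a y * F (consMap c (Function.update y n b)) *
          (Gam (consMap c y))⁻¹ ∂ν = γ (n + 1) b * ∫⁻ y, cI n a y *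
          (F (consMap c (Function.update y n b)) *
          (Gam (consMap c (Function.update y n b)))⁻¹) ∂ν := by
        rw [← lintegral_const_mul _ (by fun_prop), ← lintegral_const_mul _ (by fun_prop)]
        refine lintegral_congr fun y => ?_
        rw [mul_left_comm (γ (n+1) b), mul_assoc (cI n a y), mul_left_comm]
        refine cI_mul_congr fun h => ?_
        have h2 := hGs (consMap c y) (n + 1) b
        rw [← cons_update, show consMap c y (n + 1) = a from h] at h2
        have := ennreal_inv_swap (hG0 _) (hGt _) (hG0 _) (hGt _) h2
        rw [mul_left_comm, this]; ring
      rw [mul_assoc, h4, mul_left_comm, h3]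
      simp only [mul_assoc]
      rw [mul_left_comm]
    have hs : ∀ H : (ℕ → A) → ℝ≥0∞, Measurable H →
        ∫⁻ x, H x ∂ν = ∑ c, ∫⁻ x, cI 0 c x * H x ∂ν := by
      intro H hH
      rw [← lintegral_finsetSum _ (fun c _ => by have := measurable_cI (A := A) 0 c; fun_prop)]
      refine lintegral_congr fun x => ?_
      rw [← Finset.sum_mul]
      have := sum_cI 0 (fun _ => 1) x
      simp only [one_mul] at this
      rw [this, one_mul]
    rw [hs (fun x => cI (n + 1) a x * F (Function.update x (n + 1) b))
        ((measurable_cI _ _).mul (hF.comp (measurable_upd _ _))),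
      hs (fun x => cI (n + 1) b x * F x) ((measurable_cI _ _).mul hF), Finset.mul_sum, Finset.mul_sum]
    exact Finset.sum_congr rfl fun c _ => key c

/-- normalisation -/
noncomputable def Zn (γ : ℕ → A → ℝ≥0∞) (n : ℕ) : ℝ≥0∞ := ∑ a, (wt γ n a)⁻¹

/-- the factor measures -/
noncomputable def Pn (γ : ℕ → A → ℝ≥0∞) (n : ℕ) : Measure A :=
  ∑ a, ((wt γ n a)⁻¹ * (Zn γ n)⁻¹) • Measure.dirac a

lemma wt_ne_zero {γ : ℕ → A → ℝ≥0∞} (h0 : ∀ n a, γ n a ≠ 0) (n a) : wt γ n a ≠ 0 :=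
  Finset.prod_ne_zero_iff.2 fun _ _ => h0 _ _

lemma wt_ne_top {γ : ℕ → A → ℝ≥0∞} (ht : ∀ n a, γ n a ≠ ∞) (n a) : wt γ n a ≠ ∞ :=
  ENNReal.prod_ne_top fun _ _ => ht _ _

lemma Zn_ne_zero [Nonempty A] {γ : ℕ → A → ℝ≥0∞} (ht : ∀ n a, γ n a ≠ ∞) (n) : Zn γ n ≠ 0 := by
  unfold Zn
  intro h
  rw [Finset.sum_eq_zero_iff] at h
  have := h (Classical.arbitrary A) (Finset.mem_univ _)
  exact wt_ne_top ht _ _ (ENNReal.inv_eq_zero.1 this)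

lemma Zn_ne_top {γ : ℕ → A → ℝ≥0∞} (h0 : ∀ n a, γ n a ≠ 0) (n) : Zn γ n ≠ ∞ := by
  unfold Zn
  exact ENNReal.sum_ne_top.2 fun a _ => ENNReal.inv_ne_top.2 (wt_ne_zero h0 _ _)

lemma Pn_apply (γ : ℕ → A → ℝ≥0∞) (n : ℕ) (t : Set A) :
    Pn γ n t = ∑ a, (wt γ n a)⁻¹ * (Zn γ n)⁻¹ * t.indicator 1 a := by
  simp [Pn, Measure.finsetSum_apply]

lemma Pn_singleton (γ : ℕ → A → ℝ≥0∞) (n : ℕ) (a : A) :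
    Pn γ n {a} = (wt γ n a)⁻¹ * (Zn γ n)⁻¹ := by
  classical
  rw [Pn_apply]
  simp [Set.indicator_apply]

lemma Pn_prob [Nonempty A] {γ : ℕ → A → ℝ≥0∞} (h0 : ∀ n a, γ n a ≠ 0) (ht : ∀ n a, γ n a ≠ ∞)
    (n : ℕ) : IsProbabilityMeasure (Pn γ n) := by
  constructor
  rw [Pn_apply]
  simp only [Set.indicator_univ, Pi.one_apply, mul_one]
  rw [← Finset.sum_mul]
  exact ENNReal.mul_inv_cancel (Zn_ne_zero ht n) (Zn_ne_top h0 n)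

lemma swap_indep [Nonempty A] {γ : ℕ → A → ℝ≥0∞} (h0 : ∀ n a, γ n a ≠ 0) (ht : ∀ n a, γ n a ≠ ∞)
    {ν : Measure (ℕ → A)} (hS : SwapInv γ ν) (n : ℕ) (t : Set A) (F : (ℕ → A) → ℝ≥0∞)
    (hF : Measurable F) (hFn : ∀ x b, F (Function.update x n b) = F x) :
    ∫⁻ x, t.indicator 1 (x n) * F x ∂ν = Pn γ n t * ∫⁻ x, F x ∂ν := by
  have hm : ∀ h : A → ℝ≥0∞, ∫⁻ x, h (x n) * F x ∂ν = ∑ a, h a * ∫⁻ x, cI n a x * F x ∂ν := by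
    intro h
    have : ∀ a, h a * ∫⁻ x, cI n a x * F x ∂ν = ∫⁻ x, h a * cI n a x * F x ∂ν := by
      intro a
      rw [← lintegral_const_mul _ (by have := measurable_cI (A := A) n a; fun_prop)]
      simp only [mul_assoc]
    simp only [this]
    rw [← lintegral_finsetSum _ (fun c _ => by have := measurable_cI (A := A) n c; fun_prop)]
    refine lintegral_congr fun x => ?_
    rw [← Finset.sum_mul, sum_cI]
  have hsw : ∀ a b, wt γ n a * ∫⁻ x, cI n a x * F x ∂ν = wt γ n b * ∫⁻ x, cI n b x * F x ∂ν := by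
    intro a b
    have := hS n a b F hF
    simpa only [hFn] using this
  have hall := hm (fun _ => 1)
  simp only [one_mul] at hall
  have hp : ∀ a, ∫⁻ x, cI n a x * F x ∂ν
      = (wt γ n a)⁻¹ * (Zn γ n)⁻¹ * ∫⁻ x, F x ∂ν := by
    intro a
    have h1 : ∫⁻ x, F x ∂ν = Zn γ n * (wt γ n a * ∫⁻ x, cI n a x * F x ∂ν) := by
      rw [hall, Zn, Finset.sum_mul]
      refine Finset.sum_congr rfl fun b _ => ?_
      rw [hsw a b, ← mul_assoc, ENNReal.inv_mul_cancel (wt_ne_zero h0 _ _) (wt_ne_top ht _ _),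
        one_mul]
    rw [h1, show ∀ p q r s v : ℝ≥0∞, p * q * (r * (s * v)) = (p * s) * ((q * r) * v) by
      intros; ring, ENNReal.inv_mul_cancel (wt_ne_zero h0 _ _) (wt_ne_top ht _ _),
      ENNReal.inv_mul_cancel (Zn_ne_zero ht _) (Zn_ne_top h0 _), one_mul, one_mul]
  rw [hm, Pn_apply, Finset.sum_mul]
  refine Finset.sum_congr rfl fun a _ => ?_
  rw [hp]; ring

lemma swap_box [Nonempty A] {γ : ℕ → A → ℝ≥0∞} (h0 : ∀ n a, γ n a ≠ 0) (ht : ∀ n a, γ n a ≠ ∞)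
    {ν : Measure (ℕ → A)} (hS : SwapInv γ ν) (s : Finset ℕ) (t : ℕ → Set A) :
    ν ((s : Set ℕ).pi t) = (∏ i ∈ s, Pn γ i (t i)) * ν Set.univ := by
  classical
  have hms : ∀ s : Finset ℕ, MeasurableSet ((s : Set ℕ).pi t) := fun s =>
    MeasurableSet.pi s.countable_toSet fun _ _ => (Set.toFinite _).measurableSet
  induction s using Finset.induction_on with
  | empty => simp
  | insert n s hn ih =>
    rw [Finset.prod_insert hn, mul_assoc, ← ih, ← lintegral_indicator_one (hms _),
      ← lintegral_indicator_one (hms _), ← swap_indep h0 ht hS n (t n)]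
    · refine lintegral_congr fun x => ?_
      simp only [Set.indicator_apply, Finset.coe_insert, Set.insert_pi, Set.mem_inter_iff,
        Set.mem_preimage, Function.eval, Pi.one_apply]
      by_cases h1 : x n ∈ t n <;> simp [h1]
    · exact measurable_one.indicator (hms s)
    · intro x b
      have : Function.update x n b ∈ (s : Set ℕ).pi t ↔ x ∈ (s : Set ℕ).pi t := by
        simp only [Set.mem_pi]
        refine forall₂_congr fun i hi => ?_
        rw [Function.update_of_ne]
        rintro rfl; exact hn hi
      simp only [Set.indicator_apply, this, Pi.one_apply]

lemma swap_unique [Nonempty A] {γ : ℕ → A → ℝ≥0∞} (h0 : ∀ n a, γ n a ≠ 0)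
    (ht : ∀ n a, γ n a ≠ ∞) [∀ n, IsProbabilityMeasure (Pn γ n)]
    {ν : Measure (ℕ → A)} (hS : SwapInv γ ν) (hν0 : ν Set.univ ≠ 0) (hνt : ν Set.univ ≠ ∞) :
    ν = ν Set.univ • Measure.infinitePi (Pn γ) := by
  have : (ν Set.univ)⁻¹ • ν = Measure.infinitePi (Pn γ) := by
    refine Measure.eq_infinitePi _ fun s t _ => ?_
    rw [Measure.smul_apply, swap_box h0 ht hS, smul_eq_mul, mul_left_comm,
      ENNReal.inv_mul_cancel hν0 hνt, mul_one]
  rw [← this, smul_smul, ENNReal.mul_inv_cancel hν0 hνt, one_smul]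

lemma swap_infinitePi [Nonempty A] {γ : ℕ → A → ℝ≥0∞} (h0 : ∀ n a, γ n a ≠ 0)
    (ht : ∀ n a, γ n a ≠ ∞) [hP : ∀ n, IsProbabilityMeasure (Pn γ n)] :
    SwapInv γ (Measure.infinitePi (Pn γ)) := by
  classical
  intro n a b F hF
  have hQ : ∀ i, IsProbabilityMeasure (Function.update (Pn γ) n (Measure.dirac b) i) := by
    intro i
    by_cases h : i = n
    · subst h; simp only [Function.update_self]; infer_instance
    · simp only [Function.update_of_ne h]; infer_instance
  set μ := Measure.infinitePi (Pn γ) with hμ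
  have key : ∀ a, Measure.map (fun x : ℕ → A => Function.update x n b)
      ((Zn γ n * wt γ n a) • μ.withDensity (cI n a))
      = Measure.infinitePi (Function.update (Pn γ) n (Measure.dirac b)) := by
    intro a
    refine Measure.eq_infinitePi _ fun s t hts => ?_
    have hms : MeasurableSet ((s : Set ℕ).pi t) :=
      MeasurableSet.pi s.countable_toSet fun _ _ => hts _
    rw [Measure.map_apply (measurable_upd n b) hms, Measure.smul_apply, smul_eq_mul,
      withDensity_apply _ (measurable_upd n b hms), ← lintegral_indicator (measurable_upd n b hms)]
    by_cases hb : n ∈ s → b ∈ t n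
    · have hset : ∀ x, ((fun x : ℕ → A => Function.update x n b) ⁻¹' (s : Set ℕ).pi t).indicator
          (cI n a) x = Set.indicator (((insert n s : Finset ℕ) : Set ℕ).pi
            (Function.update t n {a})) 1 x := by
        intro x
        have : x ∈ ((insert n s : Finset ℕ) : Set ℕ).pi (Function.update t n {a}) ↔
            (x n = a ∧ Function.update x n b ∈ (s : Set ℕ).pi t) := by
          simp only [Set.mem_pi, Finset.coe_insert, Set.mem_insert_iff, forall_eq_or_imp,
            Function.update_self, Set.mem_singleton_iff]
          refine and_congr_right fun hx => forall₂_congr fun i hi => ?_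
          by_cases h : i = n
          · subst h; simp [hx, hb hi]
          · simp [Function.update_of_ne h]
        simp only [Set.indicator_apply, Set.mem_preimage, this, cI, Pi.one_apply]
        by_cases h1 : x n = a <;> simp [h1]
      rw [lintegral_congr hset, lintegral_indicator_one
        (MeasurableSet.pi (Finset.countable_toSet _) fun _ _ => (Set.toFinite _).measurableSet),
        hμ, Measure.infinitePi_pi _ (fun _ _ => (Set.toFinite _).measurableSet)]
      have e1 : ∏ i ∈ insert n s, Pn γ i (Function.update t n {a} i)
          = Pn γ n {a} * ∏ i ∈ s.erase n, Pn γ i (t i) := by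
        rw [← Finset.insert_erase (Finset.mem_insert_self n s),
          Finset.prod_insert (Finset.notMem_erase _ _)]
        simp only [Function.update_self, Finset.erase_insert_eq_erase]
        congr 1
        refine Finset.prod_congr rfl fun i hi => ?_
        rw [Function.update_of_ne (Finset.ne_of_mem_erase hi)]
      have e2 : ∏ i ∈ s, (Function.update (Pn γ) n (Measure.dirac b) i) (t i)
          = ∏ i ∈ s.erase n, Pn γ i (t i) := by
        by_cases hn : n ∈ s
        · rw [← Finset.mul_prod_erase _ _ hn, Function.update_self,
            Measure.dirac_apply_of_mem (hb hn), one_mul]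
          refine Finset.prod_congr rfl fun i hi => ?_
          rw [Function.update_of_ne (Finset.ne_of_mem_erase hi)]
        · rw [Finset.erase_eq_of_notMem hn]
          refine Finset.prod_congr rfl fun i hi => ?_
          rw [Function.update_of_ne]; rintro rfl; exact hn hi
      rw [e1, e2, Pn_singleton, show ∀ z w w' z' p : ℝ≥0∞, z * w * (w' * z' * p)
        = (z * z') * ((w * w') * p) by intros; ring,
        ENNReal.mul_inv_cancel (wt_ne_zero h0 _ _) (wt_ne_top ht _ _),
        ENNReal.mul_inv_cancel (Zn_ne_zero ht _) (Zn_ne_top h0 _), one_mul, one_mul]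
    · push Not at hb
      have hset : ∀ x, ((fun x : ℕ → A => Function.update x n b) ⁻¹' (s : Set ℕ).pi t).indicator
          (cI n a) x = 0 := by
        intro x
        rw [Set.indicator_of_notMem]
        intro hx
        have := hx n hb.1
        simp only [Function.update_self] at this
        exact hb.2 this
      rw [lintegral_congr hset, lintegral_zero, mul_zero, eq_comm]
      refine Finset.prod_eq_zero hb.1 ?_
      rw [Function.update_self, Measure.dirac_apply' _ (hts n)]
      simp [hb.2]
  have hint : ∀ a, Zn γ n * (wt γ n a * ∫⁻ x, cI n a x * F (Function.update x n b) ∂μ)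
      = ∫⁻ x, F x ∂(Measure.infinitePi (Function.update (Pn γ) n (Measure.dirac b))) := by
    intro a
    rw [← key a, lintegral_map hF (measurable_upd n b), lintegral_smul_measure,
      lintegral_withDensity_eq_lintegral_mul _ (measurable_cI n a)
        (g := fun x => F (Function.update x n b)) (hF.comp (measurable_upd n b)),
      smul_eq_mul, mul_assoc]
    rfl
  have h1 := (hint a).trans (hint b).symm
  rw [ENNReal.mul_right_inj (Zn_ne_zero ht _) (Zn_ne_top h0 _)] at h1
  rw [h1]
  congr 1
  refine lintegral_congr fun x => cI_mul_congr fun h => ?_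
  rw [← h, Function.update_eq_self]

lemma transfer_infinitePi [Nonempty A] {γ : ℕ → A → ℝ≥0∞} (h0 : ∀ n a, γ n a ≠ 0)
    (ht : ∀ n a, γ n a ≠ ∞) [hP : ∀ n, IsProbabilityMeasure (Pn γ n)]
    {Gam : (ℕ → A) → ℝ≥0∞} {B : ℝ≥0∞} (hB : B ≠ ∞) (hGB : ∀ x, Gam x ≤ B)
    (hG0 : ∀ x, Gam x ≠ 0) (hGm : Measurable Gam)
    (hGs : ∀ x n b, Gam (Function.update x n b) * γ n (x n) = Gam x * γ n b) :
    ∃ l : ℝ≥0∞, l ≠ 0 ∧ l ≠ ∞ ∧ TransferId Gam l (Measure.infinitePi (Pn γ)) := by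
  set μ := Measure.infinitePi (Pn γ) with hμ
  have hS : SwapInv γ μ := swap_infinitePi h0 ht
  let ρ : A → Measure (ℕ → A) := fun a =>
    Measure.map (shiftMap A) (μ.withDensity (fun x => cI 0 a x * Gam x))
  have hρ : ∀ a (f : (ℕ → A) → ℝ≥0∞), Measurable f →
      ∫⁻ y, f y ∂(ρ a) = ∫⁻ x, cI 0 a x * (f (shiftMap A x) * Gam x) ∂μ := by
    intro a f hf
    have hI := measurable_cI (A := A) 0 a
    rw [lintegral_map hf measurable_shiftMap, lintegral_withDensity_eq_lintegral_mul _
      (f := fun x => cI 0 a x * Gam x) (by fun_prop)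
      (g := fun x => f (shiftMap A x)) (hf.comp measurable_shiftMap)]
    refine lintegral_congr fun x => ?_
    simp only [Pi.mul_apply, Function.comp]; ring
  have hρS : ∀ c, SwapInv γ (ρ c) := by
    intro c n a b F hF
    have hI := measurable_cI (A := A) n a
    have hI' := measurable_cI (A := A) n b
    have hIc := measurable_cI (A := A) 0 c
    have hsh := measurable_shiftMap (A := A)
    have hFu : Measurable fun x => F (Function.update x n b) := hF.comp (measurable_upd n b)
    have hup := measurable_upd (A := A) (n + 1) b
    rw [hρ c (fun x => cI n a x * F (Function.update x n b)) (hI.mul hFu),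
      hρ c (fun x => cI n b x * F x) (hI'.mul hF)]
    have h1 := hS (n + 1) a b (fun x => cI 0 c x * (F (shiftMap A x) * Gam x)) (by fun_prop)
    have hw : ∀ a, wt γ (n + 1) a = wt γ n a * γ (n + 1) a := fun a =>
      Finset.prod_range_succ _ _
    have hc : ∀ a x, cI n a (shiftMap A x) = cI (n + 1) a x := fun a x => rfl
    have hc0 : ∀ x : ℕ → A, cI 0 c (Function.update x (n + 1) b) = cI 0 c x := fun x => by
      classical
      unfold cI
      exact if_congr (by rw [Function.update_of_ne (Nat.succ_ne_zero n).symm]) rfl rfl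
    simp only [hw, hc0, shift_update] at h1
    simp only [Pi.mul_apply, hc]
    have hFu2 : Measurable fun x => F (Function.update (shiftMap A x) n b) := hFu.comp hsh
    have hI2 := measurable_cI (A := A) (n + 1) a
    have hGu : Measurable fun x => Gam (Function.update x (n + 1) b) := hGm.comp hup
    have h2 : γ (n + 1) a * ∫⁻ x, cI (n + 1) a x * (cI 0 c x *
        (F (Function.update (shiftMap A x) n b) * Gam (Function.update x (n + 1) b))) ∂μ
        = γ (n + 1) b * ∫⁻ x, cI 0 c x * (cI (n + 1) a x *
          F (Function.update (shiftMap A x) n b) * Gam x) ∂μ := by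
      rw [← lintegral_const_mul _ (by fun_prop), ← lintegral_const_mul _ (by fun_prop)]
      refine lintegral_congr fun x => ?_
      rw [show ∀ p q r s t : ℝ≥0∞, p * (q * (r * s * t)) = r * (p * (q * (s * t))) by
        intros; ring, mul_left_comm]
      refine cI_mul_congr fun h => ?_
      have := hGs x (n + 1) b
      rw [h] at this
      rw [show ∀ p q r s : ℝ≥0∞, p * (q * (r * s)) = q * r * (s * p) by intros; ring, this]
      ring
    rw [mul_assoc, h2] at h1
    have h3 : γ (n + 1) b * (wt γ n a * ∫⁻ x, cI 0 c x * (cI (n + 1) a x *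
          F (Function.update (shiftMap A x) n b) * Gam x) ∂μ)
        = γ (n + 1) b * (wt γ n b * ∫⁻ x, cI 0 c x * (cI (n + 1) b x *
          F (shiftMap A x) * Gam x) ∂μ) := by
      rw [mul_left_comm, h1, mul_assoc, mul_left_comm]
      congr 2
      refine lintegral_congr fun x => ?_
      ring
    exact (ENNReal.mul_right_inj (h0 _ _) (ht _ _)).1 h3
  have huniv : ∀ a, ρ a Set.univ = ∫⁻ x, cI 0 a x * Gam x ∂μ := by
    intro a
    have := hρ a (fun _ => 1) measurable_const
    simpa using this
  have hab : ∀ a b, ρ a Set.univ = ρ b Set.univ := by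
    intro a b
    rw [huniv, huniv]
    have h1 := hS 0 a b Gam hGm
    simp only [wt, zero_add, Finset.range_one, Finset.prod_singleton] at h1
    have hI := measurable_cI (A := A) 0 a
    have hGu : Measurable fun x => Gam (Function.update x 0 b) := hGm.comp (measurable_upd 0 b)
    have h2 : γ 0 a * ∫⁻ x, cI 0 a x * Gam (Function.update x 0 b) ∂μ
        = γ 0 b * ∫⁻ x, cI 0 a x * Gam x ∂μ := by
      rw [← lintegral_const_mul _ (by fun_prop), ← lintegral_const_mul _ (by fun_prop)]
      refine lintegral_congr fun x => ?_
      rw [mul_left_comm, mul_left_comm (γ 0 b)]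
      refine cI_mul_congr fun h => ?_
      have := hGs x 0 b
      rw [h] at this
      rw [mul_comm, this, mul_comm]
    rw [h2] at h1
    exact (ENNReal.mul_right_inj (h0 _ _) (ht _ _)).1 h1
  have hsum : ∑ a, ρ a Set.univ = ∫⁻ x, Gam x ∂μ := by
    simp only [huniv]
    rw [← lintegral_finsetSum _ (fun c _ => by have := measurable_cI (A := A) 0 c; fun_prop)]
    refine lintegral_congr fun x => ?_
    rw [← Finset.sum_mul]
    have := sum_cI 0 (fun _ => 1) x
    simp only [one_mul] at this
    rw [this, one_mul]
  have hGint0 : ∫⁻ x, Gam x ∂μ ≠ 0 := by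
    rw [Ne, lintegral_eq_zero_iff hGm]
    intro h
    obtain ⟨x, hx⟩ := h.exists
    exact hG0 x hx
  have hGintt : ∫⁻ x, Gam x ∂μ ≠ ∞ := by
    refine ne_top_of_le_ne_top hB ?_
    calc ∫⁻ x, Gam x ∂μ ≤ ∫⁻ _, B ∂μ := lintegral_mono hGB
      _ = B := by simp
  have hk0 : ∀ a, ρ a Set.univ ≠ 0 := by
    intro a h
    apply hGint0
    rw [← hsum]
    exact Finset.sum_eq_zero fun b _ => (hab b a).trans h
  have hkt : ∀ a, ρ a Set.univ ≠ ∞ := by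
    intro a
    refine ne_top_of_le_ne_top hGintt ?_
    rw [← hsum]
    exact Finset.single_le_sum (f := fun a => ρ a Set.univ) (fun _ _ => zero_le) (Finset.mem_univ a)
  let a0 : A := Classical.arbitrary A
  refine ⟨(ρ a0 Set.univ)⁻¹, ENNReal.inv_ne_zero.2 (hkt _), ENNReal.inv_ne_top.2 (hk0 _), ?_⟩
  intro a f hf
  rw [← hρ a f hf, swap_unique h0 ht (hρS a) (hk0 a) (hkt a), lintegral_smul_measure, smul_eq_mul,
    hab a a0, ← mul_assoc, ENNReal.inv_mul_cancel (hk0 _) (hkt _), one_mul]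

lemma transfer_of_conformal {Gam : (ℕ → A) → ℝ≥0∞} (hGm : Measurable Gam) {l : ℝ≥0∞}
    {ν : Measure (ℕ → A)}
    (h : ∀ C : Set (ℕ → A), MeasurableSet C → Set.InjOn (shiftMap A) C →
      ν (shiftMap A '' C) = l * ∫⁻ x in C, Gam x ∂ν) : TransferId Gam l ν := by
  intro a f hf
  have hI := measurable_cI (A := A) 0 a
  have hmeas : ν = l • Measure.map (shiftMap A) (ν.withDensity (fun x => cI 0 a x * Gam x)) := by
    ext E hE
    have hC : MeasurableSet ({x : ℕ → A | x 0 = a} ∩ shiftMap A ⁻¹' E) :=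
      (measurableSet_coord 0 a).inter (measurable_shiftMap hE)
    have h1 := h _ hC (by
      intro x hx y hy hxy
      have e1 : x = consMap a (shiftMap A x) := by
        rw [cons_shift, ← show x 0 = a from hx.1, Function.update_eq_self]
      have e2 : y = consMap a (shiftMap A y) := by
        rw [cons_shift, ← show y 0 = a from hy.1, Function.update_eq_self]
      rw [e1, e2, hxy])
    have h2 : shiftMap A '' ({x : ℕ → A | x 0 = a} ∩ shiftMap A ⁻¹' E) = E := by
      ext y
      constructor
      · rintro ⟨x, hx, rfl⟩; exact hx.2
      · intro hy
        exact ⟨consMap a y, ⟨rfl, by simpa [shift_cons] using hy⟩, shift_cons _ _⟩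
    rw [h2] at h1
    rw [h1, Measure.smul_apply, smul_eq_mul, Measure.map_apply measurable_shiftMap hE,
      withDensity_apply _ (measurable_shiftMap hE), ← lintegral_indicator hC,
      ← lintegral_indicator (measurable_shiftMap hE)]
    congr 1
    refine lintegral_congr fun x => ?_
    classical
    simp only [Set.indicator_apply, Set.mem_inter_iff, Set.mem_ofPred_eq, cI]
    by_cases hx : x 0 = a <;> simp [hx]
  conv_lhs => rw [hmeas]
  rw [lintegral_smul_measure, smul_eq_mul, lintegral_map hf measurable_shiftMap,
    lintegral_withDensity_eq_lintegral_mul _ (f := fun x => cI 0 a x * Gam x) (by fun_prop)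
      (g := fun x => f (shiftMap A x)) (hf.comp measurable_shiftMap)]
  congr 1
  refine lintegral_congr fun x => ?_
  simp only [Pi.mul_apply, Function.comp]; ring

lemma conformal_of_transfer {Gam : (ℕ → A) → ℝ≥0∞} (hGm : Measurable Gam) {l : ℝ≥0∞}
    {ν : Measure (ℕ → A)} (hK : TransferId Gam l ν)
    (C : Set (ℕ → A)) (hC : MeasurableSet C) (hinj : Set.InjOn (shiftMap A) C) :
    ν (shiftMap A '' C) = l * ∫⁻ x in C, Gam x ∂ν := by
  have hE : ∀ a, MeasurableSet (consMap a ⁻¹' C) := fun a => measurable_consMap a hC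
  have himg : shiftMap A '' C = ⋃ a ∈ (Finset.univ : Finset A), consMap a ⁻¹' C := by
    ext y
    simp only [Set.mem_image, Set.mem_iUnion, Set.mem_preimage, Finset.mem_univ, exists_const]
    constructor
    · rintro ⟨x, hx, rfl⟩
      exact ⟨x 0, by rwa [cons_shift, Function.update_eq_self]⟩
    · rintro ⟨a, ha⟩
      exact ⟨_, ha, shift_cons _ _⟩
  rw [himg, measure_biUnion_finset]
  · have : ∀ a, ν (consMap a ⁻¹' C) = l * ∫⁻ x, cI 0 a x * (C.indicator Gam x) ∂ν := by
      intro a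
      rw [← lintegral_indicator_one (hE a), hK a _ (measurable_one.indicator (hE a))]
      congr 1
      refine lintegral_congr fun x => cI_mul_congr fun h => ?_
      have : Function.update x 0 a = x := by rw [← h, Function.update_eq_self]
      classical
      simp only [Set.indicator_apply, Set.mem_preimage, cons_shift, this, Pi.one_apply]
      split_ifs <;> simp
    simp only [this]
    rw [← Finset.mul_sum, ← lintegral_finsetSum _
      (fun c _ => by
        have := measurable_cI (A := A) 0 c; have := hGm.indicator hC; fun_prop), ← lintegral_indicator hC]
    congr 1
    refine lintegral_congr fun x => ?_
    rw [← Finset.sum_mul]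
    have := sum_cI 0 (fun _ => 1) x
    simp only [one_mul] at this
    rw [this, one_mul]
  · intro a _ b _ hab
    rw [Function.onFun, Set.disjoint_left]
    intro y hy hy'
    apply hab
    have := hinj hy hy' (by rw [shift_cons, shift_cons])
    exact congrFun this 0
  · intro a _; exact hE a

lemma ergodic_infinitePi (P : ℕ → Measure A) [∀ n, IsProbabilityMeasure (P n)]
    (s : Set (ℕ → A)) (hs : MeasurableSet s) (hinv : shiftMap A ⁻¹' s = s) :
    Measure.infinitePi P s = 0 ∨ Measure.infinitePi P s = 1 := by
  have hind : ProbabilityTheory.iIndepFun (fun (i : ℕ) (x : ℕ → A) => x i)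
      (Measure.infinitePi P) :=
    ProbabilityTheory.iIndepFun_infinitePi (X := fun _ a => a) (fun _ => measurable_id)
  refine ProbabilityTheory.measure_zero_or_one_of_measurableSet_limsup_atTop
    (s := fun n => MeasurableSpace.comap (fun x : ℕ → A => x n) inferInstance)
    (fun n => (measurable_pi_apply n).comap_le) hind.iIndep ?_
  rw [Filter.limsup_eq_iInf_iSup_of_nat, MeasurableSpace.measurableSet_iInf]
  intro n
  have hit : ∀ n, (fun (x : ℕ → A) (k : ℕ) => x (k + n)) ⁻¹' s = s := by
    intro n
    induction n with
    | zero => rfl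
    | succ n ih =>
      conv_rhs => rw [← ih, ← hinv]
      ext x
      simp only [Set.mem_preimage, shiftMap]
      have : (fun k => x (k + (n + 1))) = fun k => x (k + 1 + n) := by
        funext k; congr 1; ring
      rw [this]
      rfl
  rw [← hit n]
  have hm : @Measurable _ _ (⨆ i ≥ n, MeasurableSpace.comap (fun x : ℕ → A => x i) inferInstance)
      MeasurableSpace.pi (fun (x : ℕ → A) (k : ℕ) => x (k + n)) := by
    refine @measurable_pi_lambda _ _ _ (_) _ _ fun k => ?_
    have h1 : MeasurableSpace.comap (fun x : ℕ → A => x (k + n)) inferInstance ≤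
      (⨆ i ≥ n, MeasurableSpace.comap (fun x : ℕ → A => x i) inferInstance) :=
      le_iSup₂_of_le (k + n) (Nat.le_add_left n k) le_rfl
    exact Measurable.mono (comap_measurable _) h1 le_rfl
  exact hm hs

end main

lemma potential_facts {A : Type*} [Fintype A] [Nonempty A] [MeasurableSpace A]
    [MeasurableSingletonClass A]
    (g0 : ℝ) (hg0 : 0 < g0) (g : ℕ → A → ℝ) (hg : ∀ (k : ℕ) (a : A), 0 < g k a)
    (hsum : Summable fun p : ℕ × ℕ =>
      Real.log (⨆ a : A, max (g (p.1 + p.2) a) (g (p.1 + p.2) a)⁻¹)) :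
    ∃ B : ℝ, Measurable (fun x : ℕ → A => g0 * ∏' i : ℕ, g i (x i)) ∧
      (∀ x : ℕ → A, 0 < g0 * ∏' i : ℕ, g i (x i)) ∧
      (∀ x : ℕ → A, g0 * ∏' i : ℕ, g i (x i) ≤ B) ∧
      (∀ (x : ℕ → A) n b, (g0 * ∏' i : ℕ, g i (Function.update x n b i)) * g n (x n)
        = (g0 * ∏' i : ℕ, g i (x i)) * g n b) := by
  have hs : Summable fun k : ℕ => Real.log (⨆ a : A, max (g k a) (g k a)⁻¹) := by
    have := hsum.comp_injective (i := fun k : ℕ => ((0 : ℕ), k)) (fun a b h => by simpa using h)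
    simpa [Function.comp_def] using this
  have hle : ∀ k a, |Real.log (g k a)| ≤ Real.log (⨆ a : A, max (g k a) (g k a)⁻¹) := by
    intro k a
    have hM : max (g k a) (g k a)⁻¹ ≤ ⨆ a : A, max (g k a) (g k a)⁻¹ :=
      le_ciSup (f := fun a => max (g k a) (g k a)⁻¹) (Set.finite_range _).bddAbove a
    have hp := hg k a
    rw [abs_le']
    constructor
    · exact Real.log_le_log hp ((le_max_left _ _).trans hM)
    · rw [← Real.log_inv]
      exact Real.log_le_log (inv_pos.2 hp) ((le_max_right _ _).trans hM)
  have hsx : ∀ x : ℕ → A, Summable fun i => Real.log (g i (x i)) := fun x =>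
    Summable.of_norm_bounded hs (fun i => hle i (x i))
  have hG : ∀ x : ℕ → A, ∏' i : ℕ, g i (x i) = Real.exp (∑' i, Real.log (g i (x i))) := fun x =>
    (Real.rexp_tsum_eq_tprod (fun i => hg i (x i)) (hsx x)).symm
  simp only [hG]
  refine ⟨g0 * Real.exp (∑' k, Real.log (⨆ a : A, max (g k a) (g k a)⁻¹)), ?_, ?_, ?_, ?_⟩
  · have : Measurable fun x : ℕ → A => ∑' i, Real.log (g i (x i)) := by
      refine Measurable.tsum fun i => ?_
      exact (Measurable.of_discrete (f := fun a => Real.log (g i a))).comp (measurable_pi_apply i)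
    fun_prop
  · intro x; positivity
  · intro x
    have := (hsx x).tsum_le_tsum (fun i => (le_abs_self _).trans (hle i (x i))) hs
    gcongr
  · intro x n b
    have h1 := (hsx x).hasSum.update n (Real.log (g n b))
    have h2 : Function.update (fun i => Real.log (g i (x i))) n (Real.log (g n b))
        = fun i => Real.log (g i (Function.update x n b i)) := by
      funext i
      by_cases h : i = n
      · subst h; simp
      · simp [Function.update_of_ne h]
    rw [h2] at h1
    rw [h1.tsum_eq, Real.exp_add, Real.exp_sub, Real.exp_log (hg _ _), Real.exp_log (hg _ _)]
    have := (hg n (x n)).ne'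
    field_simp

/-- For a finite alphabet `A` and positive `g_i : A → ℝ₊` with
`∑_{i=0}^∞ ∑_{k=i}^∞ log max{‖g_k‖_∞, ‖g_k⁻¹‖_∞} < ∞`, there exists exactly one conformal
probability measure for `g(x) = g_0 ∏_{i≥1} g_i(x_i)`, and this measure is ergodic for
the shift. -/
theorem stmt_7 {A : Type*} [Fintype A] [Nonempty A] [MeasurableSpace A]
    [MeasurableSingletonClass A]
    (g0 : ℝ) (hg0 : 0 < g0) (g : ℕ → A → ℝ) (hg : ∀ (k : ℕ) (a : A), 0 < g k a)
    (hsum : Summable fun p : ℕ × ℕ =>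
      Real.log (⨆ a : A, max (g (p.1 + p.2) a) (g (p.1 + p.2) a)⁻¹)) :
    ∃ μ : Measure (ℕ → A), IsProbabilityMeasure μ ∧
      (∃ lam : ℝ, 0 < lam ∧
        IsConformalFor (fun x => g0 * ∏' i : ℕ, g i (x i)) lam μ) ∧
      (∀ ν : Measure (ℕ → A), IsProbabilityMeasure ν →
        (∃ lam : ℝ, 0 < lam ∧
          IsConformalFor (fun x => g0 * ∏' i : ℕ, g i (x i)) lam ν) → ν = μ) ∧
      (∀ s : Set (ℕ → A), MeasurableSet s → shiftMap A ⁻¹' s = s →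
        μ s = 0 ∨ μ s = 1) := by
  obtain ⟨B, hGm, hGpos, hGB, hGs⟩ := potential_facts g0 hg0 g hg hsum
  set G : (ℕ → A) → ℝ := fun x => g0 * ∏' i : ℕ, g i (x i) with hGdef
  let γ : ℕ → A → ℝ≥0∞ := fun n a => ENNReal.ofReal (g n a)
  let Gam : (ℕ → A) → ℝ≥0∞ := fun x => ENNReal.ofReal (G x)
  have h0 : ∀ n a, γ n a ≠ 0 := fun n a => (ENNReal.ofReal_pos.2 (hg n a)).ne'
  have ht : ∀ n a, γ n a ≠ ∞ := fun n a => ENNReal.ofReal_ne_top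
  have hGam0 : ∀ x, Gam x ≠ 0 := fun x => (ENNReal.ofReal_pos.2 (hGpos x)).ne'
  have hGamt : ∀ x, Gam x ≠ ∞ := fun x => ENNReal.ofReal_ne_top
  have hGamm : Measurable Gam := hGm.ennreal_ofReal
  have hGamB : ∀ x, Gam x ≤ ENNReal.ofReal B := fun x => ENNReal.ofReal_le_ofReal (hGB x)
  have hGams : ∀ x n b, Gam (Function.update x n b) * γ n (x n) = Gam x * γ n b := by
    intro x n b
    change ENNReal.ofReal _ * ENNReal.ofReal _ = ENNReal.ofReal _ * ENNReal.ofReal _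
    rw [← ENNReal.ofReal_mul (hGpos _).le, ← ENNReal.ofReal_mul (hGpos _).le]
    exact congrArg _ (hGs x n b)
  have hP : ∀ n, IsProbabilityMeasure (Pn γ n) := Pn_prob h0 ht
  have hconv : ∀ (ν : Measure (ℕ → A)) [IsProbabilityMeasure ν] (lam : ℝ), 0 < lam →
      ∀ C : Set (ℕ → A), ENNReal.ofReal (lam * ∫ x in C, G x ∂ν)
        = ENNReal.ofReal lam * ∫⁻ x in C, Gam x ∂ν := by
    intro ν _ lam hlam C
    rw [ENNReal.ofReal_mul hlam.le, ofReal_integral_eq_lintegral_ofReal]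
    · refine Integrable.of_bound hGm.aestronglyMeasurable B (Filter.Eventually.of_forall fun x => ?_)
      rw [Real.norm_of_nonneg (hGpos x).le]
      exact hGB x
    · exact Filter.Eventually.of_forall fun x => (hGpos x).le
  refine ⟨Measure.infinitePi (Pn γ), inferInstance, ?_, ?_, ?_⟩
  · obtain ⟨l, hl0, hlt, hK⟩ := transfer_infinitePi h0 ht (ENNReal.ofReal_ne_top (r := B)) hGamB
      hGam0 hGamm hGams
    refine ⟨l.toReal, ENNReal.toReal_pos hl0 hlt, fun C hC hinj => ?_⟩
    rw [hconv _ _ (ENNReal.toReal_pos hl0 hlt), ENNReal.ofReal_toReal hlt]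
    exact conformal_of_transfer hGamm hK C hC hinj
  · rintro ν hν ⟨lam, hlam, hconf⟩
    have hK : TransferId Gam (ENNReal.ofReal lam) ν :=
      transfer_of_conformal hGamm fun C hC hinj => by
        rw [← hconv ν lam hlam]; exact hconf C hC hinj
    have hS : SwapInv γ ν := swapInv_of_transfer (ENNReal.ofReal_pos.2 hlam).ne'
      ENNReal.ofReal_ne_top hGam0 hGamt hGamm hGams hK
    have := swap_unique h0 ht hS (by simp) (by simp)
    rwa [measure_univ, one_smul] at this
  · intro s hs hinv
    exact ergodic_infinitePi _ s hs hinv
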